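/- For a prime p ≥ 3, the number of conjugacy classes of SL₂(F_p) is p + 4, broken down as: (p−3)/2 split semisimple classes, (p−1)/2 nonsplit semisimple classes, 2 central classes, and 4 classes of non-semisimple elements. -/

import Mathlib

open Matrix

/-- `A` is split semisimple: conjugate to a diagonal matrix with eigenvalue `μ ≠ ±1`. -/
def IsSplitSemisimple (p : ℕ) [Fact p.Prime]
    (A : Matrix.SpecialLinearGroup (Fin 2) (ZMod p)) : Prop :=
  ∃ (B : Matrix.SpecialLinearGroup (Fin 2) (ZMod p)) (μ : (ZMod p)ˣ),
    IsConj A B ∧ μ ^ 2 ≠ 1 ∧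
    (B : Matrix (Fin 2) (Fin 2) (ZMod p))
      = !![(μ : ZMod p), 0; 0, ((μ⁻¹ : (ZMod p)ˣ) : ZMod p)]

/-- `A` is nonsplit semisimple: its characteristic polynomial is irreducible over `F_p`,
equivalently `tr(A)² - 4` is a non-square. -/
def IsNonsplitSemisimple (p : ℕ) [Fact p.Prime]
    (A : Matrix.SpecialLinearGroup (Fin 2) (ZMod p)) : Prop :=
  ¬ ∃ x : ZMod p, x ^ 2 = ((A : Matrix (Fin 2) (Fin 2) (ZMod p)).trace) ^ 2 - 4

/-- `A` is central: `A = ±1`. -/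
def IsCentralSL2 (p : ℕ) [Fact p.Prime]
    (A : Matrix.SpecialLinearGroup (Fin 2) (ZMod p)) : Prop :=
  A = 1 ∨ A = -1

/-- `A` is non-semisimple: conjugate to `[[±1, α], [0, ±1]]` with `α ≠ 0`. -/
def IsNonSemisimple (p : ℕ) [Fact p.Prime]
    (A : Matrix.SpecialLinearGroup (Fin 2) (ZMod p)) : Prop :=
  ∃ (B : Matrix.SpecialLinearGroup (Fin 2) (ZMod p)) (ε α : ZMod p),
    IsConj A B ∧ (ε = 1 ∨ ε = -1) ∧ α ≠ 0 ∧
    (B : Matrix (Fin 2) (Fin 2) (ZMod p)) = !![ε, α; 0, ε]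

/-!
A non-scalar `A` in `SL₂(F)` is determined up to conjugacy by its trace `t` and any nonzero value
`d` of the quadratic form `v ↦ det (v | A v)`: the basis `v, d⁻¹ A v` brings it to companion form.
Two values `d`, `e` give conjugate matrices iff `x² + t x y + y²` represents `d e`. If `t ≠ ±2`
this form is nondegenerate, hence represents everything over a finite field of odd order, so
there is one class per trace. If `t = ±2` it is the square `(x ± y)²`, so there are two classes,
one per square class of `d`. Split traces are the values of `a + a⁻¹`, a map that is two-to-one on
`a ≠ 0, ±1`.
-/

section ConjClasses

variable {G : Type*} [Monoid G]

lemma forall_mem_carrier_mk_iff {P : G → Prop} (hP : ∀ g h, IsConj g h → P g → P h) (g : G) :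
    (∀ h ∈ (ConjClasses.mk g).carrier, P h) ↔ P g := by
  refine ⟨fun H => H g ConjClasses.mem_carrier_mk, fun hg h hh => hP g h ?_ hg⟩
  rw [ConjClasses.mem_carrier_iff_mk_eq, ConjClasses.mk_eq_mk_iff_isConj] at hh
  exact hh.symm

lemma card_conjClasses_eq_ncard_of_representatives {ι : Type*} {P : G → Prop} {r : ι → G}
    {S : Set ι} (hP : ∀ g, P g ↔ ∃ i ∈ S, IsConj g (r i))
    (hr : ∀ i ∈ S, ∀ j ∈ S, IsConj (r i) (r j) → i = j) :
    Nat.card {c : ConjClasses G // ∀ g ∈ c.carrier, P g} = S.ncard := by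
  have P_conj : ∀ g h, IsConj g h → P g → P h := by
    intro g h hgh hg
    obtain ⟨i, hi, hgi⟩ := (hP g).1 hg
    exact (hP h).2 ⟨i, hi, hgh.symm.trans hgi⟩
  have image_eq : {c : ConjClasses G | ∀ g ∈ c.carrier, P g} = (ConjClasses.mk ∘ r) '' S := by
    ext c
    obtain ⟨g, rfl⟩ := ConjClasses.exists_rep c
    rw [Set.mem_ofPred_eq, forall_mem_carrier_mk_iff P_conj, hP]
    simp only [Set.mem_image, Function.comp_apply, ConjClasses.mk_eq_mk_iff_isConj, isConj_comm]
  have injOn : S.InjOn (ConjClasses.mk ∘ r) := fun i hi j hj hij =>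
    hr i hi j hj (ConjClasses.mk_eq_mk_iff_isConj.1 hij)
  rw [← injOn.ncard_image, ← image_eq]
  rfl

lemma card_conjClasses_and_add_card_conjClasses_and_not [Finite (ConjClasses G)]
    {P : G → Prop} (Q : G → Prop) (hP : ∀ g h, IsConj g h → P g → P h) :
    Nat.card {c : ConjClasses G // ∀ g ∈ c.carrier, Q g ∧ P g} +
      Nat.card {c : ConjClasses G // ∀ g ∈ c.carrier, Q g ∧ ¬ P g} =
      Nat.card {c : ConjClasses G // ∀ g ∈ c.carrier, Q g} := by
  have not_P : ∀ g h, IsConj g h → ¬ P g → ¬ P h := fun g h hgh => mt (hP h g hgh.symm)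
  have split : {c : ConjClasses G | ∀ g ∈ c.carrier, Q g} =
      {c | ∀ g ∈ c.carrier, Q g ∧ P g} ∪ {c | ∀ g ∈ c.carrier, Q g ∧ ¬ P g} := by
    ext c
    obtain ⟨g, rfl⟩ := ConjClasses.exists_rep c
    simp only [Set.mem_union, Set.mem_ofPred_eq, forall_and, forall_mem_carrier_mk_iff hP,
      forall_mem_carrier_mk_iff not_P]
    tauto
  have disjoint : Disjoint {c : ConjClasses G | ∀ g ∈ c.carrier, Q g ∧ P g}
      {c | ∀ g ∈ c.carrier, Q g ∧ ¬ P g} := by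
    refine Set.disjoint_left.2 fun c hPc hnPc => ?_
    obtain ⟨g, rfl⟩ := ConjClasses.exists_rep c
    exact (hnPc g ConjClasses.mem_carrier_mk).2 (hPc g ConjClasses.mem_carrier_mk).2
  exact ((congrArg Set.ncard split).trans (Set.ncard_union_eq disjoint)).symm

lemma mem_center_of_isConj {G : Type*} [Group G] {g h : G} (hgh : IsConj g h)
    (hg : g ∈ Subgroup.center G) : h ∈ Subgroup.center G := by
  obtain ⟨k, rfl⟩ := isConj_iff.1 hgh
  exact Subgroup.Normal.conj_mem inferInstance g hg k

lemma card_conjClasses_mem_center (G : Type*) [Group G] :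
    Nat.card {c : ConjClasses G // ∀ g ∈ c.carrier, g ∈ Subgroup.center G} =
      Nat.card (Subgroup.center G) :=
  card_conjClasses_eq_ncard_of_representatives (S := (Subgroup.center G : Set G)) (r := id)
    (fun g => ⟨fun hg => ⟨g, hg, IsConj.refl g⟩, fun ⟨_, hh, hgh⟩ =>
      mem_center_of_isConj hgh.symm hh⟩)
    fun _ hg _ hh hgh =>
      (ConjClasses.mk_bijOn G).injOn hg hh (ConjClasses.mk_eq_mk_iff_isConj.2 hgh)

end ConjClasses

section DiscriminantCount

lemma sq_sub_four_eq_zero_iff {R : Type*} [CommRing R] [NoZeroDivisors R] {t : R} :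
    t ^ 2 - 4 = 0 ↔ t = 2 ∨ t = -2 := by
  rw [show t ^ 2 - 4 = t ^ 2 - 2 ^ 2 by ring, sub_eq_zero, sq_eq_sq_iff_eq_or_eq_neg]

lemma two_ne_neg_two {R : Type*} [Ring R] [NoZeroDivisors R] [NeZero (2 : R)] :
    (2 : R) ≠ -2 := by
  rw [ne_eq, eq_neg_iff_add_eq_zero, ← two_mul]
  exact mul_ne_zero two_ne_zero two_ne_zero

variable {K : Type*} [Field K]

lemma add_inv_eq_add_inv_iff {a b : K} (ha : a ≠ 0) (hb : b ≠ 0) :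
    a + a⁻¹ = b + b⁻¹ ↔ a = b ∨ a = b⁻¹ := by
  have factorization : a + a⁻¹ - (b + b⁻¹) = (a - b) * (a - b⁻¹) / a := by
    field_simp
    ring
  rw [← sub_eq_zero, factorization, div_eq_zero_iff, or_iff_left ha, mul_eq_zero, sub_eq_zero,
    sub_eq_zero]

lemma add_inv_sq_sub_four {a : K} (ha : a ≠ 0) : (a + a⁻¹) ^ 2 - 4 = (a - a⁻¹) ^ 2 := by
  linear_combination 4 * mul_inv_cancel₀ ha

lemma add_inv_sq_sub_four_ne_zero_iff {a : K} (ha : a ≠ 0) :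
    (a + a⁻¹) ^ 2 - 4 ≠ 0 ↔ a ^ 2 ≠ 1 := by
  rw [add_inv_sq_sub_four ha, ne_eq, ne_eq, pow_eq_zero_iff two_ne_zero, sub_eq_zero,
    ← mul_eq_one_iff_eq_inv₀ ha, sq]

variable [NeZero (2 : K)]

lemma exists_add_inv_eq_iff {t : K} : (∃ a : K, a ≠ 0 ∧ a + a⁻¹ = t) ↔ IsSquare (t ^ 2 - 4) := by
  constructor
  · rintro ⟨a, ha, rfl⟩
    exact add_inv_sq_sub_four ha ▸ IsSquare.sq _
  · rintro ⟨s, hs⟩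
    obtain ⟨a, ha⟩ := exists_quadratic_eq_zero (a := 1) (b := -t) (c := 1) one_ne_zero
      ⟨s, by rw [discrim]; linear_combination hs⟩
    have ha0 : a ≠ 0 := by
      rintro rfl
      simp at ha
    refine ⟨a, ha0, ?_⟩
    field_simp
    linear_combination ha

lemma image_add_inv_setOf_sq_ne_one :
    (fun a : K => a + a⁻¹) '' {a | a ≠ 0 ∧ a ^ 2 ≠ 1} =
      {t | t ^ 2 - 4 ≠ 0 ∧ IsSquare (t ^ 2 - 4)} := by
  ext t
  simp only [Set.mem_image, Set.mem_ofPred_eq, ← exists_add_inv_eq_iff]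
  constructor
  · rintro ⟨a, ⟨ha, ha_sq⟩, rfl⟩
    exact ⟨(add_inv_sq_sub_four_ne_zero_iff ha).2 ha_sq, a, ha, rfl⟩
  · rintro ⟨ht, a, ha, rfl⟩
    exact ⟨a, ⟨ha, (add_inv_sq_sub_four_ne_zero_iff ha).1 ht⟩, rfl⟩

lemma ringChar_ne_two : ringChar K ≠ 2 := fun h => two_ne_zero (α := K) <| by
  exact_mod_cast h ▸ ringChar.Nat.cast_ringChar (R := K)

variable [Finite K]

lemma ncard_setOf_sq_sub_four_ne_zero : {t : K | t ^ 2 - 4 ≠ 0}.ncard + 2 = Nat.card K := by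
  have compl_eq : {t : K | t ^ 2 - 4 ≠ 0} = ({2, -2} : Set K)ᶜ := by
    ext t
    exact sq_sub_four_eq_zero_iff.not
  rw [compl_eq, ← Set.ncard_pair (two_ne_neg_two (R := K)), add_comm, Set.ncard_add_ncard_compl]

lemma two_mul_ncard_setOf_isSquare_sq_sub_four :
    2 * {t : K | t ^ 2 - 4 ≠ 0 ∧ IsSquare (t ^ 2 - 4)}.ncard + 3 = Nat.card K := by
  classical
  have := Fintype.ofFinite K
  let M : Finset K := {0, 1, -1}ᶜ
  let f : K → K := fun a => a + a⁻¹
  have mem_M {a : K} : a ∈ M ↔ a ≠ 0 ∧ a ^ 2 ≠ 1 := by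
    simp [M, not_or]
  have card_M : M.card + 3 = Nat.card K := by
    have one_ne : (1 : K) ≠ -1 := fun h => two_ne_zero (α := K) (by linear_combination h)
    have card_three : ({0, 1, -1} : Finset K).card = 3 :=
      Finset.card_eq_three.2 ⟨0, 1, -1, zero_ne_one, by simp, one_ne, rfl⟩
    rw [← card_three, Finset.card_compl_add_card, Nat.card_eq_fintype_card]
  have image_eq : (M.image f : Set K) = {t : K | t ^ 2 - 4 ≠ 0 ∧ IsSquare (t ^ 2 - 4)} := by
    rw [← image_add_inv_setOf_sq_ne_one, Finset.coe_image]
    exact congrArg (f '' ·) (Set.ext fun a => mem_M)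
  have card_fiber : ∀ t ∈ M.image f, {a ∈ M | f a = t}.card = 2 := by
    intro t ht
    obtain ⟨b, hb, rfl⟩ := Finset.mem_image.1 ht
    obtain ⟨hb0, hb_sq⟩ := mem_M.1 hb
    have ne_inv : b ≠ b⁻¹ := by rwa [ne_eq, ← mul_eq_one_iff_eq_inv₀ hb0, ← sq]
    have fiber_eq : {a ∈ M | f a = f b} = ({b, b⁻¹} : Finset K) := by
      ext a
      simp only [Finset.mem_filter, mem_M, Finset.mem_insert, Finset.mem_singleton, f]
      constructor
      · rintro ⟨⟨ha0, -⟩, hab⟩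
        exact (add_inv_eq_add_inv_iff ha0 hb0).1 hab
      · rintro (rfl | rfl)
        · exact ⟨⟨hb0, hb_sq⟩, rfl⟩
        · exact ⟨⟨inv_ne_zero hb0, by simpa using hb_sq⟩, by rw [inv_inv, add_comm]⟩
    rw [fiber_eq, Finset.card_pair ne_inv]
  rw [← image_eq, Set.ncard_coe_finset, ← card_M, Finset.card_eq_sum_card_image f M,
    Finset.sum_const_nat card_fiber, mul_comm]

lemma two_mul_ncard_setOf_not_isSquare_sq_sub_four :
    2 * {t : K | ¬ IsSquare (t ^ 2 - 4)}.ncard + 1 = Nat.card K := by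
  have sdiff_eq : {t : K | t ^ 2 - 4 ≠ 0} \ {t | IsSquare (t ^ 2 - 4)} =
      {t | ¬ IsSquare (t ^ 2 - 4)} := by
    ext t
    refine and_iff_right_of_imp fun h h0 => h ?_
    rw [Set.mem_ofPred_eq, h0]
    exact IsSquare.zero
  have partition : {t : K | t ^ 2 - 4 ≠ 0 ∧ IsSquare (t ^ 2 - 4)}.ncard +
      {t : K | ¬ IsSquare (t ^ 2 - 4)}.ncard = {t : K | t ^ 2 - 4 ≠ 0}.ncard :=
    sdiff_eq ▸ Set.ncard_inter_add_ncard_sdiff_eq_ncard {t : K | t ^ 2 - 4 ≠ 0} _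
  have regular := ncard_setOf_sq_sub_four_ne_zero (K := K)
  have square := two_mul_ncard_setOf_isSquare_sq_sub_four (K := K)
  omega

end DiscriminantCount

section CommRing

variable {R : Type*} [CommRing R]

/-- The quadratic form `v ↦ det (v | A v)` of a `2 × 2` matrix `A`. It is a unit exactly where
`v, A v` is a basis; the trace and the units it represents fix the `SL₂`-class of `A`. -/
def cyclicForm (A : Matrix (Fin 2) (Fin 2) R) (v : Fin 2 → R) : R :=
  v 0 * (A *ᵥ v) 1 - v 1 * (A *ᵥ v) 0

lemma cyclicForm_eq (A : Matrix (Fin 2) (Fin 2) R) (v : Fin 2 → R) :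
    cyclicForm A v = A 1 0 * v 0 ^ 2 + (A 1 1 - A 0 0) * v 0 * v 1 - A 0 1 * v 1 ^ 2 := by
  simp only [cyclicForm, mulVec, dotProduct, Fin.sum_univ_two]
  ring

lemma cyclicForm_mulVec {A B g : Matrix (Fin 2) (Fin 2) R} (h : A * g = g * B) (v : Fin 2 → R) :
    cyclicForm A (g *ᵥ v) = g.det * cyclicForm B v := by
  rw [cyclicForm, mulVec_mulVec, h, ← mulVec_mulVec, cyclicForm, det_fin_two]
  simp only [mulVec, dotProduct, Fin.sum_univ_two]
  ring

lemma forall_cyclicForm_eq_zero_iff {A : Matrix (Fin 2) (Fin 2) R} :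
    (∀ v, cyclicForm A v = 0) ↔ A ∈ Set.range (scalar (Fin 2)) := by
  constructor
  · intro h
    have h10 : A 1 0 = 0 := by simpa [cyclicForm_eq] using h ![1, 0]
    have h01 : A 0 1 = 0 := by simpa [cyclicForm_eq] using h ![0, 1]
    have h11 : A 1 1 = A 0 0 := by simpa [cyclicForm_eq, h10, h01, sub_eq_zero] using h ![1, 1]
    refine ⟨A 0 0, ?_⟩
    ext i j
    fin_cases i <;> fin_cases j <;> simp [h10, h01, h11]
  · rintro ⟨a, rfl⟩ v
    simp [cyclicForm_eq]

lemma isConj_iff_exists_mul_eq_mul {n : Type*} [Fintype n] [DecidableEq n]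
    {A B : SpecialLinearGroup n R} :
    IsConj A B ↔ ∃ g : Matrix n n R, g.det = 1 ∧ A.1 * g = g * B.1 := by
  rw [isConj_comm, isConj_iff]
  constructor
  · rintro ⟨g, rfl⟩
    exact ⟨g.1, g.2, congrArg Subtype.val (inv_mul_cancel_right (g * B) g)⟩
  · rintro ⟨g, hg, h⟩
    exact ⟨⟨g, hg⟩, mul_inv_eq_iff_eq_mul.2 (Subtype.ext h.symm)⟩

lemma trace_eq_of_isConj {n : Type*} [Fintype n] [DecidableEq n]
    {A B : SpecialLinearGroup n R} (h : IsConj A B) : A.1.trace = B.1.trace := by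
  obtain ⟨g, rfl⟩ := isConj_iff.1 h
  exact ((trace_mul_comm (g * A).1 g⁻¹.1).trans
    (congrArg (fun B => trace B.1) (inv_mul_cancel_left g A))).symm

lemma discr_eq_trace_sq_sub_four (A : SpecialLinearGroup (Fin 2) R) :
    A.1.discr = A.1.trace ^ 2 - 4 := by
  rw [discr_fin_two, A.2, mul_one]

lemma discr_eq_of_isConj {A B : SpecialLinearGroup (Fin 2) R} (h : IsConj A B) :
    A.1.discr = B.1.discr := by
  rw [discr_eq_trace_sq_sub_four, discr_eq_trace_sq_sub_four, trace_eq_of_isConj h]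

lemma discr_eq_zero_of_mem_range_scalar {A : Matrix (Fin 2) (Fin 2) R}
    (hA : A ∈ Set.range (scalar (Fin 2))) : A.discr = 0 := by
  obtain ⟨a, rfl⟩ := hA
  rw [discr_fin_two, scalar_apply, trace_diagonal, det_diagonal, Fin.sum_univ_two,
    Fin.prod_univ_two]
  ring

lemma mem_center_iff_mem_range_scalar {A : SpecialLinearGroup (Fin 2) R} :
    A ∈ Subgroup.center (SpecialLinearGroup (Fin 2) R) ↔ A.1 ∈ Set.range (scalar (Fin 2)) := by
  rw [Matrix.SpecialLinearGroup.mem_center_iff]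
  refine exists_congr fun r => and_iff_right_of_imp fun hr => ?_
  rw [← A.2, ← hr, scalar_apply, det_diagonal, Finset.prod_const, Finset.card_univ]

/-- The matrix of trace `t` and determinant `1` whose cyclic form takes the value `d` at the
first basis vector. For `d = 1` it is the companion matrix of `X² - tX + 1`. -/
def companionSL (t : R) (d : Rˣ) : SpecialLinearGroup (Fin 2) R :=
  ⟨!![0, -(d⁻¹ : Rˣ); d, t], by simp [det_fin_two_of]⟩

lemma trace_companionSL (t : R) (d : Rˣ) : (companionSL t d).1.trace = t := by
  simp [companionSL, trace_fin_two_of]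

lemma mul_cyclicForm_companionSL (t : R) (d : Rˣ) (v : Fin 2 → R) :
    d * cyclicForm (companionSL t d).1 v =
      (d * v 0) ^ 2 + t * (d * v 0) * v 1 + v 1 ^ 2 := by
  simp only [cyclicForm_eq, companionSL, of_apply, cons_val]
  linear_combination v 1 ^ 2 * d.mul_inv

lemma isConj_companionSL_iff {A : SpecialLinearGroup (Fin 2) R} {t : R} {d : Rˣ} :
    IsConj A (companionSL t d) ↔ A.1.trace = t ∧ ∃ v, cyclicForm A.1 v = d := by
  constructor
  · intro h
    refine ⟨(trace_eq_of_isConj h).trans (trace_companionSL t d), ?_⟩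
    obtain ⟨g, hg, hAg⟩ := isConj_iff_exists_mul_eq_mul.1 h
    refine ⟨g *ᵥ ![1, 0], ?_⟩
    rw [cyclicForm_mulVec hAg, hg, one_mul, cyclicForm_eq]
    simp [companionSL]
  · rintro ⟨rfl, v, hv⟩
    -- In the basis `v, d⁻¹ A v` the matrix `A` takes companion form, by Cayley-Hamilton.
    have det_A := A.2
    rw [det_fin_two] at det_A
    refine isConj_iff_exists_mul_eq_mul.2
      ⟨!![v 0, ↑d⁻¹ * (A.1 *ᵥ v) 0; v 1, ↑d⁻¹ * (A.1 *ᵥ v) 1], ?_, ?_⟩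
    · rw [det_fin_two_of]
      rw [cyclicForm] at hv
      linear_combination (d⁻¹ : Rˣ) * hv + d.inv_mul
    · have hd := d.inv_mul
      ext i j
      fin_cases i <;> fin_cases j <;>
        simp only [companionSL, mul_apply, mulVec, dotProduct, Fin.sum_univ_two, trace_fin_two,
          of_apply, cons_val, Fin.zero_eta, Fin.mk_one]
      · linear_combination -(A.1 0 0 * v 0 + A.1 0 1 * v 1) * hd
      · linear_combination -(v 0 * (d⁻¹ : Rˣ)) * det_A
      · linear_combination -(A.1 1 0 * v 0 + A.1 1 1 * v 1) * hd
      · linear_combination -(v 1 * (d⁻¹ : Rˣ)) * det_A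

lemma companionSL_isConj_companionSL_iff {t u : R} {d e : Rˣ} :
    IsConj (companionSL t d) (companionSL u e) ↔
      t = u ∧ ∃ x y, x ^ 2 + t * x * y + y ^ 2 = d * e := by
  rw [isConj_companionSL_iff, trace_companionSL]
  refine and_congr_right fun _ => ⟨fun ⟨v, hv⟩ => ⟨d * v 0, v 1, ?_⟩, fun ⟨x, y, h⟩ => ?_⟩
  · rw [← mul_cyclicForm_companionSL, hv]
  · refine ⟨![(d⁻¹ : Rˣ) * x, y], d.isUnit.mul_left_cancel ?_⟩
    rw [mul_cyclicForm_companionSL, ← h]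
    simp [-Units.val_inv_eq_inv_val]

lemma companionSL_notMem_range_scalar [Nontrivial R] (t : R) (d : Rˣ) :
    (companionSL t d).1 ∉ Set.range (scalar (Fin 2)) := by
  rw [← forall_cyclicForm_eq_zero_iff, not_forall]
  obtain ⟨-, v, hv⟩ := isConj_companionSL_iff.1 (IsConj.refl (companionSL t d))
  exact ⟨v, hv ▸ d.ne_zero⟩

lemma isParabolic_iff_notMem_center {A : SpecialLinearGroup (Fin 2) R} :
    A.1.IsParabolic ↔
      A ∉ Subgroup.center (SpecialLinearGroup (Fin 2) R) ∧ A.1.discr = 0 := by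
  rw [mem_center_iff_mem_range_scalar, IsParabolic]

lemma isParabolic_of_isConj {A B : SpecialLinearGroup (Fin 2) R} (h : IsConj A B)
    (hA : A.1.IsParabolic) : B.1.IsParabolic := by
  rw [isParabolic_iff_notMem_center] at hA ⊢
  exact ⟨mt (mem_center_of_isConj h.symm) hA.1, discr_eq_of_isConj h ▸ hA.2⟩

variable [NoZeroDivisors R]

lemma companionSL_isConj_companionSL_iff_isSquare {t : R} (ht : t ^ 2 - 4 = 0) {d e : Rˣ} :
    IsConj (companionSL t d) (companionSL t e) ↔ IsSquare (d * e : R) := by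
  rw [companionSL_isConj_companionSL_iff, and_iff_right rfl]
  constructor
  · rintro ⟨x, y, h⟩
    rw [← h]
    obtain rfl | rfl := sq_sub_four_eq_zero_iff.1 ht
    · exact ⟨x + y, by ring⟩
    · exact ⟨x - y, by ring⟩
  · rintro ⟨r, hr⟩
    exact ⟨r, 0, by rw [hr]; ring⟩

lemma mem_center_iff_eq_one_or_eq_neg_one {A : SpecialLinearGroup (Fin 2) R} :
    A ∈ Subgroup.center (SpecialLinearGroup (Fin 2) R) ↔ A = 1 ∨ A = -1 := by
  rw [Matrix.SpecialLinearGroup.mem_center_iff, Fintype.card_fin]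
  simp only [sq_eq_one_iff, or_and_right, exists_or, exists_eq_left, map_one, map_neg]
  rw [@eq_comm _ 1, @eq_comm _ (-1)]
  exact or_congr (Subtype.ext_iff (a2 := (1 : SpecialLinearGroup (Fin 2) R))).symm
    (Subtype.ext_iff (a2 := (-1 : SpecialLinearGroup (Fin 2) R))).symm

lemma card_center_sl2 [NeZero (2 : R)] :
    Nat.card (Subgroup.center (SpecialLinearGroup (Fin 2) R)) = 2 := by
  have center_eq : (Subgroup.center (SpecialLinearGroup (Fin 2) R) :
      Set (SpecialLinearGroup (Fin 2) R)) = {1, -1} :=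
    Set.ext fun A => mem_center_iff_eq_one_or_eq_neg_one
  have one_ne_neg_one : (1 : SpecialLinearGroup (Fin 2) R) ≠ -1 := fun h =>
    two_ne_neg_two (R := R) (by simpa [trace_one] using congrArg (fun A => A.1.trace) h)
  exact (congrArg Set.ncard center_eq).trans (Set.ncard_pair one_ne_neg_one)

end CommRing

section Field

variable {K : Type*} [Field K]

lemma exists_isConj_companionSL {A : SpecialLinearGroup (Fin 2) K}
    (hA : A.1 ∉ Set.range (scalar (Fin 2))) : ∃ d, IsConj A (companionSL A.1.trace d) := by
  rw [← forall_cyclicForm_eq_zero_iff, not_forall] at hA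
  obtain ⟨v, hv⟩ := hA
  exact ⟨Units.mk0 _ hv, isConj_companionSL_iff.2 ⟨rfl, v, rfl⟩⟩

lemma exists_nonsquare_forall_isSquare_or_isSquare_mul [Finite K] [NeZero (2 : K)] :
    ∃ s : Kˣ, ¬ IsSquare (s : K) ∧ ∀ d : Kˣ, IsSquare (d : K) ∨ IsSquare (d * s : K) := by
  classical
  have := Fintype.ofFinite K
  obtain ⟨a, ha⟩ := FiniteField.exists_nonsquare (ringChar_ne_two (K := K))
  have ha0 : a ≠ 0 := fun h => ha (h ▸ IsSquare.zero)
  refine ⟨Units.mk0 a ha0, ha, fun d => or_iff_not_imp_left.2 fun hd => ?_⟩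
  rw [← quadraticChar_one_iff_isSquare (mul_ne_zero d.ne_zero (Units.ne_zero _)), map_mul,
    quadraticChar_neg_one_iff_not_isSquare.2 hd, Units.val_mk0,
    quadraticChar_neg_one_iff_not_isSquare.2 ha, neg_mul_neg, one_mul]

variable [Finite K] [NeZero (2 : K)]

open Polynomial in
lemma exists_sq_add_mul_add_sq_eq {t : K} (ht : t ^ 2 - 4 ≠ 0) (c : K) :
    ∃ x y, x ^ 2 + t * x * y + y ^ 2 = c := by
  have := Fintype.ofFinite K
  -- Completing the square: `4 (x² + t x y + y²) = (2 x + t y)² + (4 - t²) y²`.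
  obtain ⟨a, b, hab⟩ : ∃ a b, eval a (X ^ 2 : K[X]) +
      eval b (C (4 - t ^ 2) * X ^ 2 + C 0 * X + C (-4 * c)) = 0 :=
    FiniteField.exists_root_sum_quadratic (degree_X_pow 2)
      (degree_quadratic fun h => ht (by linear_combination -h))
      (FiniteField.odd_card_of_char_ne_two ringChar_ne_two)
  simp only [eval_add, eval_mul, eval_pow, eval_X, eval_C] at hab
  refine ⟨(a - t * b) / 2, b, ?_⟩
  have two_ne : (2 : K) ≠ 0 := two_ne_zero
  field_simp
  linear_combination hab

lemma isConj_companionSL_one_iff {A : SpecialLinearGroup (Fin 2) K} (hA : A.1.discr ≠ 0)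
    {t : K} : IsConj A (companionSL t 1) ↔ A.1.trace = t := by
  refine ⟨fun h => (isConj_companionSL_iff.1 h).1, ?_⟩
  rintro rfl
  have not_scalar : A.1 ∉ Set.range (scalar (Fin 2)) :=
    mt discr_eq_zero_of_mem_range_scalar hA
  obtain ⟨d, hd⟩ := exists_isConj_companionSL not_scalar
  rw [discr_eq_trace_sq_sub_four] at hA
  exact hd.trans (companionSL_isConj_companionSL_iff.2 ⟨rfl, exists_sq_add_mul_add_sq_eq hA _⟩)

lemma isConj_iff_trace_eq_trace {A B : SpecialLinearGroup (Fin 2) K} (hA : A.1.discr ≠ 0) :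
    IsConj A B ↔ A.1.trace = B.1.trace := by
  refine ⟨trace_eq_of_isConj, fun h => ?_⟩
  have hB : B.1.discr ≠ 0 := by rwa [discr_eq_trace_sq_sub_four, ← h, ← discr_eq_trace_sq_sub_four]
  exact ((isConj_companionSL_one_iff hA).2 h).trans ((isConj_companionSL_one_iff hB).2 rfl).symm

lemma card_conjClasses_discr {q : K → Prop} (hq : ¬ q 0) :
    Nat.card {c : ConjClasses (SpecialLinearGroup (Fin 2) K) // ∀ A ∈ c.carrier, q A.1.discr} =
      {t : K | q (t ^ 2 - 4)}.ncard := by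
  refine card_conjClasses_eq_ncard_of_representatives (r := fun t => companionSL t 1)
    (fun A => ⟨fun hA => ?_, ?_⟩)
    fun t _ u _ h => (companionSL_isConj_companionSL_iff.1 h).1
  · refine ⟨A.1.trace, ?_, ?_⟩
    · rwa [discr_eq_trace_sq_sub_four] at hA
    · exact (isConj_companionSL_one_iff fun h => hq (h ▸ hA)).2 rfl
  · rintro ⟨t, ht, h⟩
    rwa [discr_eq_trace_sq_sub_four, (isConj_companionSL_iff.1 h).1]

lemma card_conjClasses_isParabolic :
    Nat.card {c : ConjClasses (SpecialLinearGroup (Fin 2) K) //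
      ∀ A ∈ c.carrier, A.1.IsParabolic} = 4 := by
  obtain ⟨s, hs, isSquare_or⟩ := exists_nonsquare_forall_isSquare_or_isSquare_mul (K := K)
  have one_ne_s : 1 ≠ s := by
    rintro rfl
    exact hs IsSquare.one
  have card_index : ({2, -2} ×ˢ {1, s} : Set (K × Kˣ)).ncard = 4 := by
    rw [Set.ncard_prod, Set.ncard_pair two_ne_neg_two, Set.ncard_pair one_ne_s]
  rw [← card_index]
  refine card_conjClasses_eq_ncard_of_representatives
    (r := fun i => companionSL i.1 i.2) (fun A => ⟨fun hA => ?_, ?_⟩) ?_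
  · obtain ⟨d, hd⟩ := exists_isConj_companionSL hA.1
    have ht := hA.2
    rw [discr_eq_trace_sq_sub_four] at ht
    obtain h | h := isSquare_or d
    · exact ⟨(A.1.trace, 1), ⟨sq_sub_four_eq_zero_iff.1 ht, .inl rfl⟩,
        hd.trans ((companionSL_isConj_companionSL_iff_isSquare ht).2 (by simpa using h))⟩
    · exact ⟨(A.1.trace, s), ⟨sq_sub_four_eq_zero_iff.1 ht, .inr rfl⟩,
        hd.trans ((companionSL_isConj_companionSL_iff_isSquare ht).2 h)⟩
  · rintro ⟨⟨t, d⟩, ⟨ht, -⟩, h⟩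
    refine isParabolic_of_isConj h.symm ⟨companionSL_notMem_range_scalar t d, ?_⟩
    rw [discr_eq_trace_sq_sub_four, trace_companionSL]
    exact sq_sub_four_eq_zero_iff.2 ht
  · rintro ⟨t, d⟩ ⟨ht, hd⟩ ⟨u, e⟩ ⟨-, he⟩ h
    obtain rfl : t = u := (companionSL_isConj_companionSL_iff.1 h).1
    have hde := (companionSL_isConj_companionSL_iff_isSquare (sq_sub_four_eq_zero_iff.2 ht)).1 h
    obtain rfl | rfl := hd <;> obtain rfl | rfl := he
    · rfl
    · exact absurd (by simpa using hde) hs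
    · exact absurd (by simpa using hde) hs
    · rfl

lemma card_conjClasses_sl2 :
    Nat.card (ConjClasses (SpecialLinearGroup (Fin 2) K)) = Nat.card K + 4 := by
  have central := card_conjClasses_and_add_card_conjClasses_and_not (fun _ => True)
    fun A B h => mem_center_of_isConj (G := SpecialLinearGroup (Fin 2) K) h
  have parabolic := card_conjClasses_and_add_card_conjClasses_and_not
    (fun A => A ∉ Subgroup.center (SpecialLinearGroup (Fin 2) K))
    (P := fun A => A.1.discr = 0) fun A B h hA => discr_eq_of_isConj h ▸ hA
  have regular_iff (A : SpecialLinearGroup (Fin 2) K) :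
      A ∉ Subgroup.center (SpecialLinearGroup (Fin 2) K) ∧ ¬ A.1.discr = 0 ↔ A.1.discr ≠ 0 :=
    and_iff_right_of_imp fun h hA =>
      h (discr_eq_zero_of_mem_range_scalar (mem_center_iff_mem_range_scalar.1 hA))
  have card_regular := card_conjClasses_discr (K := K) (q := (· ≠ 0)) fun h => h rfl
  have univ : Nat.card {c : ConjClasses (SpecialLinearGroup (Fin 2) K) //
      ∀ A ∈ c.carrier, True} = Nat.card (ConjClasses (SpecialLinearGroup (Fin 2) K)) :=
    Nat.card_congr (Equiv.subtypeUnivEquiv fun _ _ _ => trivial)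
  simp only [true_and, univ, card_conjClasses_mem_center, card_center_sl2, regular_iff,
    ← isParabolic_iff_notMem_center, card_conjClasses_isParabolic] at central parabolic
  have card_traces := ncard_setOf_sq_sub_four_ne_zero (K := K)
  omega

end Field

theorem sl2_conj_class_count_general {F : Type*} [Field F] [Finite F] [NeZero (2 : F)] :
    Nat.card (ConjClasses (SpecialLinearGroup (Fin 2) F)) = Nat.card F + 4 ∧
    Nat.card {c : ConjClasses (SpecialLinearGroup (Fin 2) F) //
        ∀ A ∈ c.carrier, A.1.discr ≠ 0 ∧ IsSquare A.1.discr} = (Nat.card F - 3) / 2 ∧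
    Nat.card {c : ConjClasses (SpecialLinearGroup (Fin 2) F) //
        ∀ A ∈ c.carrier, ¬ IsSquare A.1.discr} = (Nat.card F - 1) / 2 ∧
    Nat.card {c : ConjClasses (SpecialLinearGroup (Fin 2) F) //
        ∀ A ∈ c.carrier, A ∈ Subgroup.center (SpecialLinearGroup (Fin 2) F)} = 2 ∧
    Nat.card {c : ConjClasses (SpecialLinearGroup (Fin 2) F) //
        ∀ A ∈ c.carrier, A.1.IsParabolic} = 4 := by
  refine ⟨card_conjClasses_sl2, ?_, ?_, (card_conjClasses_mem_center _).trans card_center_sl2,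
    card_conjClasses_isParabolic⟩
  · refine (card_conjClasses_discr (K := F) (q := fun s => s ≠ 0 ∧ IsSquare s) (by simp)).trans ?_
    rw [← two_mul_ncard_setOf_isSquare_sq_sub_four, Nat.add_sub_cancel,
      Nat.mul_div_cancel_left _ two_pos]
  · refine (card_conjClasses_discr (K := F) (q := fun s => ¬ IsSquare s) (by simp)).trans ?_
    rw [← two_mul_ncard_setOf_not_isSquare_sq_sub_four, Nat.add_sub_cancel,
      Nat.mul_div_cancel_left _ two_pos]

section Bridges

variable {p : ℕ} [Fact p.Prime] {A : SpecialLinearGroup (Fin 2) (ZMod p)}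

lemma isNonsplitSemisimple_iff : IsNonsplitSemisimple p A ↔ ¬ IsSquare A.1.discr := by
  rw [IsNonsplitSemisimple, discr_eq_trace_sq_sub_four, isSquare_iff_exists_sq]
  simp only [eq_comm]

lemma isCentralSL2_iff :
    IsCentralSL2 p A ↔ A ∈ Subgroup.center (SpecialLinearGroup (Fin 2) (ZMod p)) :=
  mem_center_iff_eq_one_or_eq_neg_one.symm

lemma isNonSemisimple_iff : IsNonSemisimple p A ↔ A.1.IsParabolic := by
  constructor
  · rintro ⟨B, ε, α, hAB, -, hα, hB⟩
    refine isParabolic_of_isConj hAB.symm ?_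
    rw [isParabolic_iff_of_upperTriangular] <;> simp [hB, hα]
  · intro hA
    obtain ⟨d, hd⟩ := exists_isConj_companionSL hA.1
    obtain ⟨ε, hε, trace_A⟩ : ∃ ε : ZMod p, (ε = 1 ∨ ε = -1) ∧ A.1.trace = 2 * ε := by
      have h := hA.2
      rw [discr_eq_trace_sq_sub_four, sq_sub_four_eq_zero_iff] at h
      obtain h | h := h
      · exact ⟨1, .inl rfl, by rw [h, mul_one]⟩
      · exact ⟨-1, .inr rfl, by rw [h, mul_neg_one]⟩
    let B : SpecialLinearGroup (Fin 2) (ZMod p) :=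
      ⟨!![ε, -d; 0, ε], by rw [det_fin_two_of, mul_zero, sub_zero, ← sq, sq_eq_one_iff.2 hε]⟩
    have hBd : IsConj B (companionSL A.1.trace d) := isConj_companionSL_iff.2
      ⟨by rw [trace_A, two_mul]; exact trace_fin_two_of _ _ _ _, ![0, 1], by
        simp [cyclicForm_eq, B]⟩
    exact ⟨B, ε, -d, hd.trans hBd.symm, hε, neg_ne_zero.2 d.ne_zero, rfl⟩

lemma isSplitSemisimple_iff [NeZero (2 : ZMod p)] :
    IsSplitSemisimple p A ↔ A.1.discr ≠ 0 ∧ IsSquare A.1.discr := by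
  constructor
  · rintro ⟨B, μ, hAB, hμ, hB⟩
    have trace_B : B.1.trace = μ + (μ : ZMod p)⁻¹ := by
      rw [hB, trace_fin_two_of, Units.val_inv_eq_inv_val]
    rw [discr_eq_of_isConj hAB, discr_eq_trace_sq_sub_four, trace_B,
      add_inv_sq_sub_four_ne_zero_iff μ.ne_zero, ← exists_add_inv_eq_iff]
    exact ⟨fun h => hμ (Units.ext h), μ, μ.ne_zero, rfl⟩
  · rintro ⟨hA, hA_sq⟩
    rw [discr_eq_trace_sq_sub_four, ← exists_add_inv_eq_iff] at hA_sq
    obtain ⟨a, ha, trace_A⟩ := hA_sq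
    let B : SpecialLinearGroup (Fin 2) (ZMod p) :=
      ⟨!![a, 0; 0, a⁻¹], by rw [det_fin_two_of, mul_inv_cancel₀ ha, mul_zero, sub_zero]⟩
    have hAB : IsConj A B :=
      (isConj_iff_trace_eq_trace hA).2 (trace_A.symm.trans (trace_fin_two_of _ _ _ _).symm)
    rw [discr_eq_trace_sq_sub_four, ← trace_A, add_inv_sq_sub_four_ne_zero_iff ha] at hA
    exact ⟨B, Units.mk0 a ha, hAB, fun h => hA (congrArg Units.val h), rfl⟩

end Bridges

theorem sl2_conj_class_count
    (p : ℕ) [Fact p.Prime] (hp : 3 ≤ p) :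
    Nat.card (ConjClasses (Matrix.SpecialLinearGroup (Fin 2) (ZMod p))) = p + 4 ∧
    Nat.card {c : ConjClasses (Matrix.SpecialLinearGroup (Fin 2) (ZMod p)) //
        ∀ A ∈ c.carrier, IsSplitSemisimple p A} = (p - 3) / 2 ∧
    Nat.card {c : ConjClasses (Matrix.SpecialLinearGroup (Fin 2) (ZMod p)) //
        ∀ A ∈ c.carrier, IsNonsplitSemisimple p A} = (p - 1) / 2 ∧
    Nat.card {c : ConjClasses (Matrix.SpecialLinearGroup (Fin 2) (ZMod p)) //
        ∀ A ∈ c.carrier, IsCentralSL2 p A} = 2 ∧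
    Nat.card {c : ConjClasses (Matrix.SpecialLinearGroup (Fin 2) (ZMod p)) //
        ∀ A ∈ c.carrier, IsNonSemisimple p A} = 4 := by
  have : NeZero (2 : ZMod p) := ⟨Ring.two_ne_zero (by rw [ZMod.ringChar_zmod_n]; omega)⟩
  simpa only [isSplitSemisimple_iff, isNonsplitSemisimple_iff, isCentralSL2_iff,
    isNonSemisimple_iff, Nat.card_zmod] using sl2_conj_class_count_general (F := ZMod p)
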